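/- Let γ > 0 and 0 ≤ X₀ < Y₀ be real numbers, and set λ = Y₀ - X₀. Define η(t,u) = (e^{γu} - γt(e^{γu} - 1))^{X₀/γ} / (1 - γt(e^{γu} - 1))^{Y₀/γ}. Then at every point (t,u) with 1 - γt(e^{γu} - 1) > 0 and e^{γu} - γt(e^{γu} - 1) > 0, η satisfies ∂η/∂t(t,u) + (2 - e^{γu} - e^{-γu})·∂η/∂u(t,u) + λ(1 - e^{γu})·η(t,u) = 0, and η(0,u) = e^{u X₀} for every real u. -/

import Mathlib

lemma helper_deriv (f g : ℝ → ℝ) (f' g' x a b : ℝ) (hf : HasDerivAt f f' x)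
    (hg : HasDerivAt g g' x) (hfx : 0 < f x) (hgx : 0 < g x) :
    HasDerivAt (fun y => f y ^ a / g y ^ b)
      ((a * f' / f x - b * g' / g x) * (f x ^ a / g x ^ b)) x := by
  have h1 := hf.rpow_const (p := a) (Or.inl hfx.ne')
  have h2 := hg.rpow_const (p := b) (Or.inl hgx.ne')
  have hp : g x ^ b ≠ 0 := (Real.rpow_pos_of_pos hgx b).ne'
  have h3 := h1.div h2 hp
  refine h3.congr_deriv ?_
  rw [Real.rpow_sub_one hfx.ne', Real.rpow_sub_one hgx.ne']
  have := hfx.ne'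
  have := hgx.ne'
  field_simp

/-- The moment generating function
`η(t,u) = (e^{γu} - γt(e^{γu}-1))^{X₀/γ} / (1 - γt(e^{γu}-1))^{Y₀/γ}`
of the first coordinate of the walk along a 45-degree hill satisfies
`∂η/∂t + (2 - e^{γu} - e^{-γu})·∂η/∂u + λ(1 - e^{γu})·η = 0` wherever both bases are
positive, and `η(0,u) = e^{u X₀}`, where `λ = Y₀ - X₀`. -/
theorem stmt_4 (γ X₀ Y₀ lam : ℝ) (hγ : 0 < γ) (hX₀ : 0 ≤ X₀) (hXY : X₀ < Y₀)
    (hlam : lam = Y₀ - X₀)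
    (η : ℝ → ℝ → ℝ)
    (hη : ∀ t u : ℝ, η t u =
      (Real.exp (γ * u) - γ * t * (Real.exp (γ * u) - 1)) ^ (X₀ / γ) /
        (1 - γ * t * (Real.exp (γ * u) - 1)) ^ (Y₀ / γ)) :
    (∀ t u : ℝ,
      0 < 1 - γ * t * (Real.exp (γ * u) - 1) →
      0 < Real.exp (γ * u) - γ * t * (Real.exp (γ * u) - 1) →
      deriv (fun s => η s u) t
        + (2 - Real.exp (γ * u) - Real.exp (-γ * u)) * deriv (fun w => η t w) u
        + lam * (1 - Real.exp (γ * u)) * η t u = 0) ∧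
    (∀ u : ℝ, η 0 u = Real.exp (u * X₀)) := by
  have hg0 := hγ.ne'
  constructor
  · intro t u hB hA
    have hE : HasDerivAt (fun w : ℝ => Real.exp (γ * w)) (Real.exp (γ * u) * γ) u := by
      simpa using ((hasDerivAt_id u).const_mul γ).exp
    have hT : HasDerivAt (fun s : ℝ => γ * s * (Real.exp (γ * u) - 1))
        (γ * (Real.exp (γ * u) - 1)) t := by
      simpa using ((hasDerivAt_id t).const_mul γ).mul_const (Real.exp (γ * u) - 1)
    have hU := (hE.sub_const 1).const_mul (γ * t)
    have d1 := helper_deriv _ _ _ _ t (X₀ / γ) (Y₀ / γ) (hT.const_sub (Real.exp (γ * u)))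
      (hT.const_sub 1) hA hB
    have d2 := helper_deriv _ _ _ _ u (X₀ / γ) (Y₀ / γ) (hE.sub hU) (hU.const_sub 1) hA hB
    have e1 : (fun s => η s u) = _ := funext fun s => hη s u
    have e2 : (fun w => η t w) = _ := funext fun w => hη t w
    have k1 := d1.deriv
    have k2 := d2.deriv
    simp only [Pi.sub_apply] at k1 k2
    rw [e1, e2, k1, k2, hη t u, hlam, neg_mul, Real.exp_neg]
    have hEp := (Real.exp_pos (γ * u)).ne'
    generalize Real.exp (γ * u) = E at *
    generalize hP : (E - γ * t * (E - 1)) ^ (X₀ / γ) / (1 - γ * t * (E - 1)) ^ (Y₀ / γ) = P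
    have hA' := hA.ne'
    have hB' := hB.ne'
    clear hP k1 k2 e1 e2 d1 d2 hU hT hE hA hB
    generalize hAd : E - γ * t * (E - 1) = A at *
    generalize hBd : 1 - γ * t * (E - 1) = B at *
    field_simp
    rw [← hAd, ← hBd]
    ring
  · intro u
    rw [hη]
    simp only [mul_zero, zero_mul, sub_zero, Real.one_rpow, div_one]
    rw [← Real.exp_mul]
    congr 1
    field_simp
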